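/- If a generalized rectangular diagram R' is obtained from a generalized rectangular diagram R by a cyclic permutation, then R' can be obtained from R by a finite sequence of commutations, stabilizations of type L, destabilizations of type L, end shifts of type L and vertex additions (i.e., elementary moves of type L other than cyclic permutations). -/

import Mathlib

namespace RectDiag

/-- A generalized rectangular diagram: a finite subset of `ℝ²`, whose elements are
called the vertices of the diagram. -/
abbrev GRD := Finset (ℝ × ℝ)

/-- Two diagrams are combinatorially equivalent (and hence identified) if one maps onto
the other under `(x, y) ↦ (f x, g y)` for some strictly increasing `f g : ℝ → ℝ`. -/
def CombEquiv (R R' : GRD) : Prop :=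
  ∃ f g : ℝ → ℝ, StrictMono f ∧ StrictMono g ∧
    R' = R.image fun p => (f p.1, g p.2)

/-- Move every vertex on the vertical line `x = a` to the vertical line `x = b`. -/
noncomputable def moveCol (R : GRD) (a b : ℝ) : GRD :=
  R.image fun p => if p.1 = a then (b, p.2) else p

/-- Move every vertex on the horizontal line `y = a` to the horizontal line `y = b`. -/
noncomputable def moveRow (R : GRD) (a b : ℝ) : GRD :=
  R.image fun p => if p.2 = a then (p.1, b) else p

/-- Cyclic permutation: an extreme (rightmost, leftmost, top or bottom) edge is moved
to the opposite side of the diagram; only the coordinate perpendicular to the edge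
changes. -/
def CyclicPermutation (R R' : GRD) : Prop :=
  (∃ a b : ℝ, (∃ p ∈ R, p.1 = a) ∧
    (((∀ p ∈ R, p.1 ≤ a) ∧ ∀ p ∈ R, b < p.1) ∨
     ((∀ p ∈ R, a ≤ p.1) ∧ ∀ p ∈ R, p.1 < b)) ∧
    R' = moveCol R a b) ∨
  (∃ a b : ℝ, (∃ p ∈ R, p.2 = a) ∧
    (((∀ p ∈ R, p.2 ≤ a) ∧ ∀ p ∈ R, b < p.2) ∨
     ((∀ p ∈ R, a ≤ p.2) ∧ ∀ p ∈ R, p.2 < b)) ∧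
    R' = moveRow R a b)

/-- Two sets of reals interleave in the cyclic order: their elements alternate
`a₁ < b₁ < a₂ < b₂` (or with the roles of the two sets exchanged). -/
def Interleave (A B : ℝ → Prop) : Prop :=
  (∃ a₁, A a₁ ∧ ∃ b₁, B b₁ ∧ ∃ a₂, A a₂ ∧ ∃ b₂, B b₂ ∧ a₁ < b₁ ∧ b₁ < a₂ ∧ a₂ < b₂) ∨
  (∃ b₁, B b₁ ∧ ∃ a₁, A a₁ ∧ ∃ b₂, B b₂ ∧ ∃ a₂, A a₂ ∧ b₁ < a₁ ∧ a₁ < b₂ ∧ b₂ < a₂)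

/-- Exchange the vertical lines `x = a` and `x = b` of a diagram. -/
noncomputable def swapCols (R : GRD) (a b : ℝ) : GRD :=
  R.image fun p => if p.1 = a then (b, p.2) else if p.1 = b then (a, p.2) else p

/-- Exchange the horizontal lines `y = a` and `y = b` of a diagram. -/
noncomputable def swapRows (R : GRD) (a b : ℝ) : GRD :=
  R.image fun p => if p.2 = a then (p.1, b) else if p.2 = b then (p.1, a) else p

/-- Commutation: two neighboring parallel edges (no vertex lies strictly between the
two parallel lines containing them) that do not interleave exchange their positions. -/
def Commutation (R R' : GRD) : Prop :=
  (∃ a b : ℝ, a < b ∧ (∃ p ∈ R, p.1 = a) ∧ (∃ p ∈ R, p.1 = b) ∧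
    (∀ p ∈ R, ¬ (a < p.1 ∧ p.1 < b)) ∧
    ¬ Interleave (fun y => (a, y) ∈ R) (fun y => (b, y) ∈ R) ∧
    R' = swapCols R a b) ∨
  (∃ a b : ℝ, a < b ∧ (∃ p ∈ R, p.2 = a) ∧ (∃ p ∈ R, p.2 = b) ∧
    (∀ p ∈ R, ¬ (a < p.2 ∧ p.2 < b)) ∧
    ¬ Interleave (fun x => (x, a) ∈ R) (fun x => (x, b) ∈ R) ∧
    R' = swapRows R a b)

def strictlyBetween (a t b : ℝ) : Prop := (a < t ∧ t < b) ∨ (b < t ∧ t < a)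

/-- Stabilization: a vertex `(x, y)` is replaced by the three other corners of a small
square with corners `(x, y)`, `(x', y)`, `(x, y')`, `(x', y')` (fresh lines `x'`, `y'`,
with no vertex of the diagram strictly between the lines `x, x'` nor between `y, y'`).
The two new short edges (sides of the square through the corner `(x', y')`) emerge from
their common end downward-and-leftward or upward-and-rightward exactly when the square
lies to the upper right or to the lower left of the original vertex (type L,
`typeL = true`); for type N (`typeL = false`) they emerge upward-and-leftward or
downward-and-rightward, i.e. the square lies to the upper left or to the lower right. -/
def Stab (typeL : Bool) (R R' : GRD) : Prop :=
  ∃ x y x' y' : ℝ, (x, y) ∈ R ∧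
    (if typeL then ((x < x' ∧ y < y') ∨ (x' < x ∧ y' < y))
     else ((x' < x ∧ y < y') ∨ (x < x' ∧ y' < y))) ∧
    (∀ p ∈ R, ¬ strictlyBetween x p.1 x') ∧
    (∀ p ∈ R, ¬ strictlyBetween y p.2 y') ∧
    (∀ p ∈ R, p.1 ≠ x') ∧ (∀ p ∈ R, p.2 ≠ y') ∧
    R' = insert (x', y) (insert (x, y') (insert (x', y') (R.erase (x, y))))

/-- End shift.  For adjacent vertices `v₁`, `v₂` on an edge (no vertex of the diagram
between them on the edge), where for type L (`typeL = true`) the vertex `v₂` has the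
greater coordinate along the edge and for type N (`typeL = false`) the smaller one:
either the shifts of `v₁`, `v₂` by `ε > 0` in the positive perpendicular direction are
added and `v₁` is removed, or the shifts by `ε` in the negative perpendicular direction
are added and `v₂` is removed; `ε` is small enough that no vertex of the diagram lies
between (or on) the line through `v₁, v₂` and the line through the shifted vertices. -/
def EndShift (typeL : Bool) (R R' : GRD) : Prop :=
  (∃ a y₁ y₂ ε : ℝ, 0 < ε ∧ y₁ < y₂ ∧ (a, y₁) ∈ R ∧ (a, y₂) ∈ R ∧
    (∀ t : ℝ, (a, t) ∈ R → ¬ (y₁ < t ∧ t < y₂)) ∧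
    (((∀ p ∈ R, ¬ (a < p.1 ∧ p.1 ≤ a + ε)) ∧
       R' = insert (a + ε, y₁) (insert (a + ε, y₂)
         (R.erase (a, if typeL then y₁ else y₂)))) ∨
     ((∀ p ∈ R, ¬ (a - ε ≤ p.1 ∧ p.1 < a)) ∧
       R' = insert (a - ε, y₁) (insert (a - ε, y₂)
         (R.erase (a, if typeL then y₂ else y₁)))))) ∨
  (∃ a x₁ x₂ ε : ℝ, 0 < ε ∧ x₁ < x₂ ∧ (x₁, a) ∈ R ∧ (x₂, a) ∈ R ∧
    (∀ t : ℝ, (t, a) ∈ R → ¬ (x₁ < t ∧ t < x₂)) ∧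
    (((∀ p ∈ R, ¬ (a < p.2 ∧ p.2 ≤ a + ε)) ∧
       R' = insert (x₁, a + ε) (insert (x₂, a + ε)
         (R.erase (if typeL then x₁ else x₂, a)))) ∨
     ((∀ p ∈ R, ¬ (a - ε ≤ p.2 ∧ p.2 < a)) ∧
       R' = insert (x₁, a - ε) (insert (x₂, a - ε)
         (R.erase (if typeL then x₂ else x₁, a))))))

/-- Vertex addition: a new vertex is added on the vertical (respectively horizontal)
line through an existing vertex, provided no vertex of the diagram lies on the
horizontal (respectively vertical) line through the new vertex. -/
def VertexAddition (R R' : GRD) : Prop :=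
  ∃ v : ℝ × ℝ, v ∉ R ∧ R' = insert v R ∧
    (((∃ w ∈ R, w.1 = v.1) ∧ ∀ w ∈ R, w.2 ≠ v.2) ∨
     ((∃ w ∈ R, w.2 = v.2) ∧ ∀ w ∈ R, w.1 ≠ v.1))

/-- An elementary move of type L (`typeL = true`) or N (`typeL = false`): a cyclic
permutation, a commutation, a stabilization or destabilization of the given type, an
end shift of the given type, or a vertex addition. -/
def ElemMove (typeL : Bool) (R R' : GRD) : Prop :=
  CyclicPermutation R R' ∨ Commutation R R' ∨ Stab typeL R R' ∨ Stab typeL R' R ∨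
    EndShift typeL R R' ∨ VertexAddition R R'

/-- One step in a sequence of elementary moves of the given type; since diagrams are
identified up to combinatorial equivalence, combinatorially equivalent diagrams are
also related by a step. -/
def Step (typeL : Bool) (R R' : GRD) : Prop :=
  ElemMove typeL R R' ∨ CombEquiv R R'

/-- In the cyclic order (on `ℝ` closed up into a circle), the elements of `A`, then the
point `u`, then the elements of `B` occur in this cyclic order. -/
def CyclicBetween (A : Finset ℝ) (u : ℝ) (B : Finset ℝ) : Prop :=
  ((∀ a ∈ A, a < u) ∧ (∀ b ∈ B, u < b)) ∨
  ((∀ b ∈ B, u < b) ∧ (∀ a ∈ A, ∀ b ∈ B, b < a)) ∨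
  ((∀ a ∈ A, a < u) ∧ (∀ a ∈ A, ∀ b ∈ B, b < a))

/-- Edge breaking.  The vertices of a horizontal (respectively vertical) edge on the
line `c` are separated into two nonempty parts `S₁`, `S₂`, placed on neighboring lines
`c₁ ≤ c ≤ c₂` (`c₁ < c₂`, with no other vertex of the diagram between the lines `c₁`
and `c₂`), forming edges `e₁` (from `S₁`, on `c₁`) and `e₂` (from `S₂`, on `c₂`, the one
with the greater perpendicular coordinate); the two pieces are joined by a short edge on
a fresh line `u`, which in the cyclic order is greater than the coordinates of the
vertices of `e₂` and smaller than those of `e₁` for type L, and the other way around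
(the roles of `e₁` and `e₂` exchanged) for type N. -/
def EdgeBreaking (typeL : Bool) (R R' : GRD) : Prop :=
  (∃ c c₁ c₂ u : ℝ, ∃ S₁ S₂ : Finset ℝ,
    c₁ < c₂ ∧ c₁ ≤ c ∧ c ≤ c₂ ∧ S₁.Nonempty ∧ S₂.Nonempty ∧ Disjoint S₁ S₂ ∧
    (∀ x : ℝ, (x, c) ∈ R ↔ x ∈ S₁ ∪ S₂) ∧
    (∀ p ∈ R, p.1 ≠ u) ∧
    (∀ p ∈ R, c₁ ≤ p.2 ∧ p.2 ≤ c₂ → p.2 = c) ∧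
    (if typeL then CyclicBetween S₂ u S₁ else CyclicBetween S₁ u S₂) ∧
    R' = ((R.filter fun p => p.2 ≠ c) ∪ S₁.image (fun x => (x, c₁)) ∪
      S₂.image (fun x => (x, c₂)) ∪ {(u, c₁), (u, c₂)})) ∨
  (∃ c c₁ c₂ u : ℝ, ∃ S₁ S₂ : Finset ℝ,
    c₁ < c₂ ∧ c₁ ≤ c ∧ c ≤ c₂ ∧ S₁.Nonempty ∧ S₂.Nonempty ∧ Disjoint S₁ S₂ ∧
    (∀ y : ℝ, (c, y) ∈ R ↔ y ∈ S₁ ∪ S₂) ∧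
    (∀ p ∈ R, p.2 ≠ u) ∧
    (∀ p ∈ R, c₁ ≤ p.1 ∧ p.1 ≤ c₂ → p.1 = c) ∧
    (if typeL then CyclicBetween S₂ u S₁ else CyclicBetween S₁ u S₂) ∧
    R' = ((R.filter fun p => p.1 ≠ c) ∪ S₁.image (fun y => (c₁, y)) ∪
      S₂.image (fun y => (c₂, y)) ∪ {(c₁, u), (c₂, u)}))

/-- `p` lies in the open rectangle `(x₀, x₁) × (y₀, y₁)`. -/
def inRect (x₀ x₁ y₀ y₁ : ℝ) (p : ℝ × ℝ) : Prop :=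
  x₀ < p.1 ∧ p.1 < x₁ ∧ y₀ < p.2 ∧ p.2 < y₁

/-- A flype of type L (in the forward direction): for `x₀ < x₁ < x₂`, `y₀ < y₁ < y₂`,
with rectangles `r_ij = (x_i, x_{i+1}) × (y_j, y_{j+1})`: the rectangle `r₁₁` contains
no vertex; in each of `r₀₁` and `r₁₀`, of any two vertices the right one is higher; and
every vertex `v` in `r₀₀` has a vertex `v₀₁ ∈ r₀₁` with the same `x`-coordinate and a
vertex `v₁₀ ∈ r₁₀` with the same `y`-coordinate.  The move takes each such `v` to the
fourth corner of the rectangle with corners `v`, `v₀₁`, `v₁₀`, all other vertices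
staying fixed. -/
def FlypeLOnce (R R' : GRD) : Prop :=
  ∃ x₀ x₁ x₂ y₀ y₁ y₂ : ℝ, x₀ < x₁ ∧ x₁ < x₂ ∧ y₀ < y₁ ∧ y₁ < y₂ ∧
    (∀ p ∈ R, ¬ inRect x₁ x₂ y₁ y₂ p) ∧
    (∀ p ∈ R, ∀ q ∈ R, inRect x₀ x₁ y₁ y₂ p → inRect x₀ x₁ y₁ y₂ q →
      p.1 < q.1 → p.2 < q.2) ∧
    (∀ p ∈ R, ∀ q ∈ R, inRect x₁ x₂ y₀ y₁ p → inRect x₁ x₂ y₀ y₁ q →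
      p.1 < q.1 → p.2 < q.2) ∧
    ∃ φ : ℝ × ℝ → ℝ × ℝ,
      (∀ p ∈ R, ¬ inRect x₀ x₁ y₀ y₁ p → φ p = p) ∧
      (∀ p ∈ R, inRect x₀ x₁ y₀ y₁ p →
        ∃ q ∈ R, ∃ r ∈ R, inRect x₀ x₁ y₁ y₂ q ∧ q.1 = p.1 ∧
          inRect x₁ x₂ y₀ y₁ r ∧ r.2 = p.2 ∧ φ p = (r.1, q.2)) ∧
      R' = R.image φ

/-- A flype of type L: the move just described or its inverse. -/
def FlypeL (R R' : GRD) : Prop := FlypeLOnce R R' ∨ FlypeLOnce R' R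

/-- A fence diagram: posts are horizontal segments `[l, r] × {y}`, `y ∈ posts` (all
related by a vertical shift); wires are vertical segments recorded as
`(x, bottom level, top level)`, with endpoints interior to posts and no two wires on
the same vertical line. -/
structure Fence where
  posts : Finset ℝ
  l : ℝ
  r : ℝ
  wires : Finset (ℝ × ℝ × ℝ)
  hlr : l < r
  hx : ∀ w ∈ wires, l < w.1 ∧ w.1 < r
  hy : ∀ w ∈ wires, w.2.1 ∈ posts ∧ w.2.2 ∈ posts ∧ w.2.1 < w.2.2
  hinj : ∀ w ∈ wires, ∀ w' ∈ wires, w.1 = w'.1 → w = w'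

/-- Combinatorial equivalence of fence diagrams. -/
def FenceEquiv (F F' : Fence) : Prop :=
  ∃ f g : ℝ → ℝ, StrictMono f ∧ StrictMono g ∧
    F'.l = f F.l ∧ F'.r = f F.r ∧
    F'.posts = F.posts.image g ∧
    F'.wires = F.wires.image fun w => (f w.1, g w.2.1, g w.2.2)

/-- The wire on the vertical line `x` joining the posts at levels `p` and `q`. -/
noncomputable def mkWire (x p q : ℝ) : ℝ × ℝ × ℝ := (x, min p q, max p q)

/-- Twirl: the top (respectively bottom) post is moved to the opposite side, taking
along all wires attached to it. -/
def Twirl (F F' : Fence) : Prop :=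
  F'.l = F.l ∧ F'.r = F.r ∧
  ((∃ t b : ℝ, t ∈ F.posts ∧ (∀ y ∈ F.posts, y ≤ t) ∧ (∀ y ∈ F.posts, b < y) ∧
     F'.posts = insert b (F.posts.erase t) ∧
     F'.wires = F.wires.image fun w => if w.2.2 = t then (w.1, b, w.2.1) else w) ∨
   (∃ t b : ℝ, b ∈ F.posts ∧ (∀ y ∈ F.posts, b ≤ y) ∧ (∀ y ∈ F.posts, y < t) ∧
     F'.posts = insert t (F.posts.erase b) ∧
     F'.wires = F.wires.image fun w => if w.2.1 = b then (w.1, w.2.2, t) else w))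

/-- Turn: the rightmost (respectively leftmost) wire is moved to the opposite side. -/
def Turn (F F' : Fence) : Prop :=
  F'.l = F.l ∧ F'.r = F.r ∧ F'.posts = F.posts ∧
  ((∃ w ∈ F.wires, ∃ x : ℝ, (∀ w' ∈ F.wires, w'.1 ≤ w.1) ∧
     F.l < x ∧ (∀ w' ∈ F.wires, w' ≠ w → x < w'.1) ∧ x < w.1 ∧
     F'.wires = insert (x, w.2) (F.wires.erase w)) ∨
   (∃ w ∈ F.wires, ∃ x : ℝ, (∀ w' ∈ F.wires, w.1 ≤ w'.1) ∧
     x < F.r ∧ (∀ w' ∈ F.wires, w' ≠ w → w'.1 < x) ∧ w.1 < x ∧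
     F'.wires = insert (x, w.2) (F.wires.erase w)))

/-- Two wires interleave if exactly one endpoint level of one lies strictly between the
endpoint levels of the other. -/
def WiresInterleave (w w' : ℝ × ℝ × ℝ) : Prop :=
  (w.2.1 < w'.2.1 ∧ w'.2.1 < w.2.2 ∧ w.2.2 < w'.2.2) ∨
  (w'.2.1 < w.2.1 ∧ w.2.1 < w'.2.2 ∧ w'.2.2 < w.2.2)

/-- Slip: two neighboring non-interleaving wires exchange their horizontal positions. -/
def Slip (F F' : Fence) : Prop :=
  F'.l = F.l ∧ F'.r = F.r ∧ F'.posts = F.posts ∧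
  ∃ w₁ ∈ F.wires, ∃ w₂ ∈ F.wires, w₁.1 < w₂.1 ∧
    (∀ w ∈ F.wires, ¬ (w₁.1 < w.1 ∧ w.1 < w₂.1)) ∧
    ¬ WiresInterleave w₁ w₂ ∧
    F'.wires = insert (w₂.1, w₁.2) (insert (w₁.1, w₂.2) ((F.wires.erase w₁).erase w₂))

/-- `a`, `b`, `c` occur in this cyclic order on `ℝ` closed up into a circle. -/
def CyclicOrd3 (a b c : ℝ) : Prop :=
  (a < b ∧ b < c) ∨ (b < c ∧ c < a) ∨ (c < a ∧ a < b)

/-- Slide: given two neighboring wires, the left joining posts at levels `a` and `b`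
and the right joining posts at levels `a` and `c` with `a < b < c < a` in the cyclic
order, they are replaced by two wires at the same horizontal positions, the left
joining levels `b` and `c` and the right joining levels `b` and `a`. -/
def Slide (F F' : Fence) : Prop :=
  F'.l = F.l ∧ F'.r = F.r ∧ F'.posts = F.posts ∧
  ∃ a b c x₁ x₂ : ℝ, x₁ < x₂ ∧ CyclicOrd3 a b c ∧
    mkWire x₁ a b ∈ F.wires ∧ mkWire x₂ a c ∈ F.wires ∧
    (∀ w ∈ F.wires, ¬ (x₁ < w.1 ∧ w.1 < x₂)) ∧
    F'.wires = insert (mkWire x₁ b c) (insert (mkWire x₂ b a)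
      ((F.wires.erase (mkWire x₁ a b)).erase (mkWire x₂ a c)))

/-- Inflation: a new post is added at a fresh vertical level and joined to some
existing post by one new wire (on a fresh vertical line). -/
def Inflation (F F' : Fence) : Prop :=
  F'.l = F.l ∧ F'.r = F.r ∧
  ∃ n m x : ℝ, n ∉ F.posts ∧ m ∈ F.posts ∧
    F.l < x ∧ x < F.r ∧ (∀ w ∈ F.wires, w.1 ≠ x) ∧
    F'.posts = insert n F.posts ∧
    F'.wires = insert (mkWire x n m) F.wires

/-- A fence move: a twirl, a turn, a slip, a slide, an inflation or a deflation. -/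
def FenceMove (F F' : Fence) : Prop :=
  Twirl F F' ∨ Turn F F' ∨ Slip F F' ∨ Slide F F' ∨ Inflation F F' ∨ Inflation F' F

/-- One step in a sequence of fence moves; combinatorially equivalent fence diagrams
are identified. -/
def FenceStep (F F' : Fence) : Prop := FenceMove F F' ∨ FenceEquiv F F'

/-- `R(F)`: the generalized rectangular diagram whose vertices are the endpoints of
the wires of the fence diagram `F`. -/
noncomputable def fenceToGRD (F : Fence) : GRD :=
  F.wires.image (fun w => (w.1, w.2.1)) ∪ F.wires.image (fun w => (w.1, w.2.2))

/-- Every vertical edge of the diagram contains exactly two vertices. -/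
def VertTwo (R : GRD) : Prop :=
  ∀ a : ℝ, (∃ y : ℝ, (a, y) ∈ R) →
    ∃ y₁ y₂ : ℝ, y₁ < y₂ ∧ ∀ y : ℝ, ((a, y) ∈ R ↔ (y = y₁ ∨ y = y₂))

/-- `F` is a fence diagram `F(R)` of the diagram `R` (each of whose vertical edges is
assumed to contain exactly two vertices): its wires are the vertical edges of `R` and
its posts are horizontal segments at exactly the levels of the horizontal edges of
`R`. -/
def IsFenceOf (R : GRD) (F : Fence) : Prop :=
  F.posts = R.image Prod.snd ∧
  ∀ w : ℝ × ℝ × ℝ,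
    (w ∈ F.wires ↔ ((w.1, w.2.1) ∈ R ∧ (w.1, w.2.2) ∈ R ∧ w.2.1 < w.2.2))

/-!
Consider a cyclic permutation that moves the rightmost edge, on the line `x = a`, to a line `x = b`
to the left of the diagram. Two vertex additions create a horizontal rail from `(b, u)` to `(a, u)`.
All vertices lie between the lines `x = b` and `x = a`, so the rail interleaves with no other row
and commutations bring it to any free height. Put it right below the lowest remaining vertex
`(a, y)`. An end shift splits a short vertical edge off the line `x = a`; lying between neighboring
rows, it commutes with every column and travels to the left of `x = b`, where an end shift and a
destabilization merge it into a vertex `(b, y)`. When only one vertex besides the rail is left on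
`x = a`, that edge is itself short: it travels the same way and is absorbed by a destabilization
together with the rail. The remaining three kinds of cyclic permutation follow by the half-turn and
the reflection in the diagonal, both of which preserve type L.
-/

open Set Filter Topology
open scoped Pointwise

section RealLemmas

theorem exists_mem_Ioo_forall_lt (s : Finset ℝ) {a b : ℝ} (hab : a < b) :
    ∃ c ∈ Ioo a b, ∀ x ∈ s, x < b → x < c := by
  have hs : ∀ᶠ c in 𝓝[<] b, ∀ x ∈ s, x < b → x < c := by
    rw [eventually_all_finset]
    intro x _
    rw [eventually_imp_distrib_left]
    exact fun hxb ↦ mem_of_superset (Ioo_mem_nhdsLT hxb) fun _ hc ↦ hc.1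
  have hIoo : ∀ᶠ c in 𝓝[<] b, c ∈ Ioo a b := Ioo_mem_nhdsLT hab
  exact (hIoo.and hs).exists

theorem exists_strictMono_eqOn {s : Set ℝ} (hs : s.Finite) {h : ℝ → ℝ} (hh : StrictMonoOn h s) :
    ∃ f : ℝ → ℝ, StrictMono f ∧ EqOn h f s := by
  -- `h - ε • id` is monotone on `s` for small `ε > 0`; adding `ε • id` back to a monotone extension
  -- of it makes that extension strictly monotone.
  obtain ⟨ε, hslope, hε⟩ : ∃ ε, (∀ x ∈ s, ∀ y ∈ s, x < y → ε * (y - x) < h y - h x) ∧ 0 < ε := by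
    refine Eventually.exists (f := 𝓝[>] (0 : ℝ)) (.and ?_ self_mem_nhdsWithin)
    simp only [eventually_all_finite hs, eventually_imp_distrib_left]
    intro x hx y hy hxy
    have hlim : Tendsto (fun ε ↦ ε * (y - x)) (𝓝[>] 0) (𝓝 (0 * (y - x))) :=
      (tendsto_id.mul_const _).mono_left nhdsWithin_le_nhds
    exact hlim.eventually_lt_const (by simpa using hh hx hy hxy)
  have hmono : MonotoneOn (fun x ↦ h x - ε * x) s := by
    intro x hx y hy hxy
    rcases hxy.eq_or_lt with rfl | hxy
    · rfl
    · linarith [hslope x hx y hy hxy]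
  obtain ⟨g, hg, hgs⟩ := hmono.exists_monotone_extension (hs.image _).bddBelow (hs.image _).bddAbove
  refine ⟨fun x ↦ g x + ε * x, hg.add_strictMono (strictMono_id.const_mul hε), fun x hx ↦ ?_⟩
  linarith [hgs hx]

end RealLemmas

section Interleave

variable {A B : ℝ → Prop} {u v : ℝ}

theorem Interleave.of_comp_neg (h : Interleave (fun t ↦ A (-t)) fun t ↦ B (-t)) :
    Interleave B A := by
  rcases h with ⟨a, ha, b, hb, c, hc, d, hd, hab, hbc, hcd⟩ |
    ⟨a, ha, b, hb, c, hc, d, hd, hab, hbc, hcd⟩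
  · exact .inl ⟨-d, hd, -c, hc, -b, hb, -a, ha, by linarith, by linarith, by linarith⟩
  · exact .inr ⟨-d, hd, -c, hc, -b, hb, -a, ha, by linarith, by linarith, by linarith⟩

theorem not_interleave_pair_of_notMem_Ioo (hA : ∀ t, A t → t = u ∨ t = v)
    (hB : ∀ t, B t → t ∉ Ioo u v) (huv : u ≤ v) : ¬ Interleave A B := by
  rintro (⟨a₁, ha₁, b₁, hb₁, a₂, ha₂, _, _, h₁, h₂, _⟩ |
    ⟨_, _, a₁, ha₁, b₂, hb₂, a₂, ha₂, _, h₂, h₃⟩)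
  · have := hB b₁ hb₁
    grind
  · have := hB b₂ hb₂
    grind

theorem not_interleave_pair_of_mem_Icc (hA : ∀ t, A t → t = u ∨ t = v)
    (hB : ∀ t, B t → t ∈ Icc u v) : ¬ Interleave A B := by
  rintro (⟨a₁, ha₁, b₁, hb₁, _, _, b₂, hb₂, h₁, h₂, _⟩ |
    ⟨b₁, hb₁, a₁, ha₁, b₂, hb₂, _, _, h₁, h₂, _⟩)
  · grind
  · grind

end Interleave

section Symmetry

/-- The reflection of a diagram in the diagonal `x = y`. It exchanges the horizontal and vertical
versions of each move of type L. -/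
noncomputable def transpose (R : GRD) : GRD := R.image Prod.swap

variable {A B : GRD}

theorem mem_transpose {R : GRD} {x y : ℝ} : (x, y) ∈ transpose R ↔ (y, x) ∈ R := by
  simp [transpose]

theorem mem_swapCols {R : GRD} {a b x y : ℝ} :
    (x, y) ∈ swapCols R a b ↔
      (x ≠ a ∧ x ≠ b ∧ (x, y) ∈ R) ∨ (x = b ∧ (a, y) ∈ R) ∨ (x = a ∧ (b, y) ∈ R) := by
  simp only [swapCols, Finset.mem_image, Prod.exists]
  grind

theorem mem_swapRows {R : GRD} {a b x y : ℝ} :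
    (x, y) ∈ swapRows R a b ↔
      (y ≠ a ∧ y ≠ b ∧ (x, y) ∈ R) ∨ (y = b ∧ (x, a) ∈ R) ∨ (y = a ∧ (x, b) ∈ R) := by
  simp only [swapRows, Finset.mem_image, Prod.exists]
  grind

theorem Commutation.transpose (h : Commutation A B) :
    Commutation (transpose A) (transpose B) := by
  simp only [Commutation, Prod.exists, Prod.forall, mem_transpose] at h ⊢
  rcases h with ⟨a, b, hab, ⟨x, y, hxy, rfl⟩, ⟨z, w, hzw, rfl⟩, hadj, hI, rfl⟩ |
    ⟨a, b, hab, ⟨x, y, hxy, rfl⟩, ⟨z, w, hzw, rfl⟩, hadj, hI, rfl⟩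
  · refine .inr ⟨x, z, hab, ⟨y, x, hxy, rfl⟩, ⟨w, z, hzw, rfl⟩, fun p q h ↦ hadj q p h, hI, ?_⟩
    ext ⟨p, q⟩
    simp only [mem_transpose, mem_swapCols, mem_swapRows]
  · refine .inl ⟨y, w, hab, ⟨y, x, hxy, rfl⟩, ⟨w, z, hzw, rfl⟩, fun p q h ↦ hadj q p h, hI, ?_⟩
    ext ⟨p, q⟩
    simp only [mem_transpose, mem_swapCols, mem_swapRows]

theorem Stab.transpose (h : Stab true A B) : Stab true (transpose A) (transpose B) := by
  obtain ⟨x, y, x', y', hxy, hL, hx, hy, hx', hy', rfl⟩ := h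
  refine ⟨y, x, y', x', by simpa [mem_transpose] using hxy, ?_, ?_⟩
  · simp only [if_true] at hL ⊢
    tauto
  · simp only [Prod.forall, mem_transpose] at *
    refine ⟨fun p q ↦ hy q p, fun p q ↦ hx q p, fun p q ↦ hy' q p, fun p q ↦ hx' q p, ?_⟩
    ext ⟨p, q⟩
    simp only [mem_transpose, Finset.mem_insert, Finset.mem_erase, Prod.mk.injEq, ne_eq]
    tauto

theorem EndShift.transpose (h : EndShift true A B) :
    EndShift true (transpose A) (transpose B) := by
  simp only [EndShift, if_true, Prod.forall, mem_transpose] at h ⊢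
  refine h.symm.imp ?_ ?_ <;> rintro ⟨a, u, v, ε, hε, huv, hu, hv, hadj, h⟩ <;>
    refine ⟨a, u, v, ε, hε, huv, hu, hv, hadj, h.imp ?_ ?_⟩ <;> rintro ⟨hgap, rfl⟩ <;>
    refine ⟨fun p q hpq ↦ hgap q p hpq, ?_⟩ <;> ext ⟨p, q⟩ <;>
    simp only [mem_transpose, Finset.mem_insert, Finset.mem_erase, Prod.mk.injEq, ne_eq,
      and_comm (b := q = _)]

theorem VertexAddition.transpose (h : VertexAddition A B) :
    VertexAddition (transpose A) (transpose B) := by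
  simp only [VertexAddition, Prod.exists, Prod.forall, Finset.ext_iff, mem_transpose,
    Finset.mem_insert, Prod.mk.injEq] at h ⊢
  grind

theorem CombEquiv.transpose (h : CombEquiv A B) : CombEquiv (transpose A) (transpose B) := by
  obtain ⟨f, g, hf, hg, rfl⟩ := h
  refine ⟨g, f, hg, hf, ?_⟩
  simp only [RectDiag.transpose, Finset.image_image, Function.comp_def, Prod.swap]

theorem Commutation.neg (h : Commutation A B) : Commutation (-A) (-B) := by
  simp only [Commutation, Prod.exists, Prod.forall, Finset.mem_neg', Prod.neg_mk] at h ⊢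
  rcases h with ⟨a, b, hab, ⟨x, y, hxy, rfl⟩, ⟨z, w, hzw, rfl⟩, hadj, hI, rfl⟩ |
    ⟨a, b, hab, ⟨x, y, hxy, rfl⟩, ⟨z, w, hzw, rfl⟩, hadj, hI, rfl⟩
  · refine .inl ⟨-z, -x, by linarith, ⟨-z, -w, by simpa using hzw, rfl⟩,
      ⟨-x, -y, by simpa using hxy, rfl⟩, fun p q h ↦ by grind, ?_, ?_⟩
    · simp only [neg_neg]
      exact fun h ↦ hI (.of_comp_neg h)
    · ext ⟨p, q⟩
      simp only [Finset.mem_neg', Prod.neg_mk, mem_swapCols, neg_neg]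
      grind
  · refine .inr ⟨-w, -y, by linarith, ⟨-z, -w, by simpa using hzw, rfl⟩,
      ⟨-x, -y, by simpa using hxy, rfl⟩, fun p q h ↦ by grind, ?_, ?_⟩
    · simp only [neg_neg]
      exact fun h ↦ hI (Interleave.of_comp_neg (A := fun t ↦ (t, w) ∈ A) h)
    · ext ⟨p, q⟩
      simp only [Finset.mem_neg', Prod.neg_mk, mem_swapRows, neg_neg]
      grind

theorem Stab.neg (h : Stab true A B) : Stab true (-A) (-B) := by
  obtain ⟨x, y, x', y', hxy, hL, hx, hy, hx', hy', rfl⟩ := h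
  simp only [if_true, strictlyBetween, Prod.forall] at hL hx hy hx' hy'
  refine ⟨-x, -y, -x', -y', by simpa using hxy, by simpa [or_comm] using hL, ?_⟩
  simp only [strictlyBetween, Prod.forall, Finset.mem_neg', Prod.neg_mk]
  refine ⟨by grind, by grind, by grind, by grind, ?_⟩
  ext ⟨p, q⟩
  simp only [Finset.mem_neg', Prod.neg_mk, Finset.mem_insert, Finset.mem_erase, Prod.mk.injEq,
    neg_eq_iff_eq_neg, ne_eq]

theorem EndShift.neg (h : EndShift true A B) : EndShift true (-A) (-B) := by
  simp only [EndShift, if_true, Prod.forall, Finset.mem_neg', Prod.neg_mk] at h ⊢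
  refine h.imp ?_ ?_ <;> rintro ⟨a, u, v, ε, hε, huv, hu, hv, hadj, h⟩ <;>
    refine ⟨-a, -v, -u, ε, hε, neg_lt_neg huv, by simpa using hv, by simpa using hu,
      fun t ht ↦ by have := hadj (-t) (by simpa using ht); grind, h.symm.imp ?_ ?_⟩ <;>
    rintro ⟨hgap, rfl⟩ <;> refine ⟨fun p q hpq ↦ by have := hgap _ _ hpq; grind, ?_⟩ <;>
    ext ⟨p, q⟩ <;>
    simp only [Finset.mem_neg', Prod.neg_mk, Finset.mem_insert, Finset.mem_erase, Prod.mk.injEq,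
      ne_eq, neg_eq_iff_eq_neg] <;> grind

theorem VertexAddition.neg (h : VertexAddition A B) : VertexAddition (-A) (-B) := by
  obtain ⟨⟨x, y⟩, hxy, rfl, h⟩ := h
  refine ⟨(-x, -y), by simpa using hxy, by ext ⟨p, q⟩; simp, ?_⟩
  simp only [Prod.exists, Prod.forall, Finset.mem_neg', Prod.neg_mk] at h ⊢
  refine h.imp ?_ ?_ <;> rintro ⟨⟨p, q, hpq, rfl⟩, hne⟩ <;>
    exact ⟨⟨-p, -q, by simpa using hpq, rfl⟩, by grind⟩

theorem CombEquiv.neg (h : CombEquiv A B) : CombEquiv (-A) (-B) := by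
  obtain ⟨f, g, hf, hg, rfl⟩ := h
  refine ⟨fun x ↦ -f (-x), fun x ↦ -g (-x), ?_, ?_, ?_⟩
  · exact fun x y h ↦ neg_lt_neg (hf (neg_lt_neg h))
  · exact fun x y h ↦ neg_lt_neg (hg (neg_lt_neg h))
  · simp [← Finset.image_neg_eq_neg, Finset.image_image, Function.comp_def]

end Symmetry

section LMove

/-- An elementary move of type L other than a cyclic permutation, or the identification of two
combinatorially equivalent diagrams. -/
inductive LMove : GRD → GRD → Prop
  | commutation {A B : GRD} (h : Commutation A B) : LMove A B
  | stab {A B : GRD} (h : Stab true A B) : LMove A B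
  | destab {A B : GRD} (h : Stab true B A) : LMove A B
  | endShift {A B : GRD} (h : EndShift true A B) : LMove A B
  | vertexAddition {A B : GRD} (h : VertexAddition A B) : LMove A B
  | combEquiv {A B : GRD} (h : CombEquiv A B) : LMove A B

/-- The second diagram is obtained from the first by finitely many moves `LMove`. -/
abbrev LReachable : GRD → GRD → Prop := Relation.ReflTransGen LMove

variable {A B : GRD}

theorem transpose_transpose (R : GRD) : transpose (transpose R) = R := by
  simp [transpose, Finset.image_image]

theorem LMove.transpose : LMove A B → LMove (transpose A) (transpose B)
  | commutation h => .commutation h.transpose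
  | stab h => .stab h.transpose
  | destab h => .destab h.transpose
  | endShift h => .endShift h.transpose
  | vertexAddition h => .vertexAddition h.transpose
  | combEquiv h => .combEquiv h.transpose

theorem LMove.neg : LMove A B → LMove (-A) (-B)
  | commutation h => .commutation h.neg
  | stab h => .stab h.neg
  | destab h => .destab h.neg
  | endShift h => .endShift h.neg
  | vertexAddition h => .vertexAddition h.neg
  | combEquiv h => .combEquiv h.neg

theorem LReachable.transpose (h : LReachable A B) : LReachable (transpose A) (transpose B) :=
  Relation.ReflTransGen.lift RectDiag.transpose (fun _ _ ↦ LMove.transpose) _ _ h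

theorem LReachable.neg (h : LReachable A B) : LReachable (-A) (-B) :=
  Relation.ReflTransGen.lift (- ·) (fun _ _ ↦ LMove.neg) _ _ h

end LMove

section Travel

variable {R : GRD} {a b c d e x y : ℝ}

theorem exists_mem_uIoo_separating (s : Finset ℝ) (ha : a ∈ uIoo c d) (hb : b ∈ uIoo c d)
    (hab : a ≠ b) :
    ∃ m ∈ uIoo c d, m ∉ s ∧ (a ∉ uIoo c m ∨ b ∉ uIoo c m) ∧ (a ∉ uIoo m d ∨ b ∉ uIoo m d) := by
  obtain ⟨m, hm, hms⟩ := (Ioo_infinite (inf_lt_sup.2 hab)).exists_notMem_finset s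
  exact ⟨m, by grind [uIoo], hms, by grind [uIoo], by grind [uIoo]⟩

theorem mem_moveCol : (x, y) ∈ moveCol R a b ↔ x ≠ a ∧ (x, y) ∈ R ∨ x = b ∧ (a, y) ∈ R := by
  simp only [moveCol, Finset.mem_image, Prod.exists]
  grind

theorem eq_or_mem_of_mem_moveCol {p : ℝ × ℝ} (hp : p ∈ moveCol R a b) : p.1 = b ∨ p ∈ R := by
  obtain ⟨q, hq, rfl⟩ := Finset.mem_image.1 hp
  grind

theorem transpose_moveCol : transpose (moveCol R a b) = moveRow (transpose R) a b := by
  simp only [transpose, moveCol, moveRow, Finset.image_image]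
  refine Finset.image_congr fun p _ ↦ ?_
  grind [Prod.swap]

theorem moveCol_eq_self (ha : ¬ ∃ p ∈ R, p.1 = a) : moveCol R a b = R :=
  (Finset.image_congr fun p hp ↦ if_neg fun h ↦ ha ⟨p, hp, h⟩).trans Finset.image_id

theorem moveCol_moveCol (hb : b ∉ R.image Prod.fst) :
    moveCol (moveCol R a b) b c = moveCol R a c := by
  rw [moveCol, moveCol, Finset.image_image]
  exact Finset.image_congr fun p hp ↦ by grind

theorem not_interleave_moveCol (hb : b ∉ R.image Prod.fst) (hea : e ≠ a) (heb : e ≠ b)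
    (h : ¬ Interleave (fun y ↦ (a, y) ∈ R) fun y ↦ (e, y) ∈ R) :
    ¬ Interleave (fun y ↦ (b, y) ∈ moveCol R a b) fun y ↦ (e, y) ∈ moveCol R a b := by
  have hbR : ∀ y, (b, y) ∉ R := by simpa using hb
  simpa [mem_moveCol, hea, heb, hbR] using h

theorem combEquiv_image_fst {g : ℝ → ℝ} (hg : StrictMonoOn g (Prod.fst '' (R : Set (ℝ × ℝ)))) :
    CombEquiv R (R.image fun p ↦ (g p.1, p.2)) := by
  obtain ⟨f, hf, hgf⟩ := exists_strictMono_eqOn (R.finite_toSet.image _) hg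
  refine ⟨f, id, hf, strictMono_id, Finset.image_congr fun p hp ↦ ?_⟩
  simp only [hgf (mem_image_of_mem _ hp), id]

theorem commutation_swapCols (hce : c ≠ e) (hc : ∃ p ∈ R, p.1 = c) (he : ∃ p ∈ R, p.1 = e)
    (hgap : ∀ p ∈ R, p.1 ∉ uIoo c e)
    (hI : ¬ Interleave (fun y ↦ (c, y) ∈ R) fun y ↦ (e, y) ∈ R) :
    Commutation R (swapCols R c e) := by
  rcases hce.lt_or_gt with hlt | hlt
  · rw [uIoo_of_lt hlt] at hgap
    exact .inl ⟨c, e, hlt, hc, he, hgap, hI, rfl⟩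
  · rw [uIoo_of_gt hlt] at hgap
    refine .inl ⟨e, c, hlt, he, hc, hgap, fun h ↦ hI h.symm, ?_⟩
    ext ⟨x, y⟩
    simp only [mem_swapCols]
    tauto

theorem combEquiv_moveCol (hd : ∀ p ∈ R, p.1 ≠ d) (hgap : ∀ p ∈ R, p.1 ∉ uIoo c d) :
    CombEquiv R (moveCol R c d) := by
  have hg : StrictMonoOn (fun x ↦ if x = c then d else x) (Prod.fst '' (R : Set (ℝ × ℝ))) := by
    rintro _ ⟨p, hp, rfl⟩ _ ⟨q, hq, rfl⟩ hpq
    have := hgap p hp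
    have := hgap q hq
    grind [uIoo]
  convert combEquiv_image_fst hg using 1
  exact Finset.image_congr fun p _ ↦ by grind

theorem lReachable_moveCol_of_unique (hd : ∀ p ∈ R, p.1 ≠ d) (hc : ∃ p ∈ R, p.1 = c)
    (he : ∃ p ∈ R, p.1 = e) (hecd : e ∈ uIoo c d) (hgap : ∀ p ∈ R, p.1 ∈ uIoo c d → p.1 = e)
    (hI : ¬ Interleave (fun y ↦ (c, y) ∈ R) fun y ↦ (e, y) ∈ R) :
    LReachable R (moveCol R c d) := by
  simp only [uIoo, mem_Ioo] at hecd hgap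
  have hcomm : Commutation R (swapCols R c e) :=
    commutation_swapCols (by grind) hc he (fun p hp ↦ by have := hgap p hp; grind [uIoo]) hI
  have hg : StrictMonoOn (fun x ↦ if x = c then e else if x = e then d else x)
      (Prod.fst '' (swapCols R c e : Set (ℝ × ℝ))) := by
    have hcols : ∀ p ∈ swapCols R c e, p.1 = c ∨ p.1 = e ∨ p.1 < c ⊓ d ∨ c ⊔ d < p.1 := by
      simp only [swapCols, Finset.forall_mem_image]
      intro p hp
      have := hd p hp
      have := hgap p hp
      grind
    rintro _ ⟨p, hp, rfl⟩ _ ⟨q, hq, rfl⟩ hpq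
    have := hcols p hp
    have := hcols q hq
    grind
  have hrelabel : CombEquiv (swapCols R c e) (moveCol R c d) := by
    convert combEquiv_image_fst hg using 1
    rw [swapCols, Finset.image_image]
    exact Finset.image_congr fun p _ ↦ by grind
  exact .head (.commutation hcomm) (.single (.combEquiv hrelabel))

theorem lReachable_moveCol (hd : ∀ p ∈ R, p.1 ≠ d)
    (hI : ∀ e ∈ uIoo c d, ¬ Interleave (fun y ↦ (c, y) ∈ R) fun y ↦ (e, y) ∈ R) :
    LReachable R (moveCol R c d) := by
  classical
  obtain ⟨S, hS⟩ : ∃ S : Finset ℝ, ∀ p ∈ R, p.1 ∈ uIoo c d → p.1 ∈ S :=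
    ⟨R.image Prod.fst, fun p hp _ ↦ Finset.mem_image_of_mem _ hp⟩
  induction S using Finset.strongInduction generalizing R c d with
  | H S ih =>
  by_cases hc : ∃ p ∈ R, p.1 = c
  swap
  · rw [moveCol_eq_self hc]
  by_cases hslide : ∀ p ∈ R, p.1 ∉ uIoo c d
  · exact .single (.combEquiv (combEquiv_moveCol hd hslide))
  by_cases hpass : ∃ p ∈ R, p.1 ∈ uIoo c d ∧ ∀ q ∈ R, q.1 ∈ uIoo c d → q.1 = p.1
  · obtain ⟨p, hp, hpcd, hp_unique⟩ := hpass
    exact lReachable_moveCol_of_unique hd hc ⟨p, hp, rfl⟩ hpcd hp_unique (hI p.1 hpcd)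
  push Not at hslide hpass
  obtain ⟨p, hp, hpcd⟩ := hslide
  obtain ⟨q, hq, hqcd, hqp⟩ := hpass p hp hpcd
  obtain ⟨m, hmcd, hmR, hsepc, hsepd⟩ :=
    exists_mem_uIoo_separating (R.image Prod.fst) hqcd hpcd hqp
  have hsub : ∀ e, e ∈ uIoo c m ∨ e ∈ uIoo m d → e ∈ uIoo c d ∧ e ≠ c ∧ e ≠ m := by grind [uIoo]
  have hlt : ∀ I : Set ℝ, q.1 ∉ I ∨ p.1 ∉ I → S.filter (· ∈ I) ⊂ S := fun I hI ↦
    Finset.filter_ssubset.2 (hI.elim (⟨_, hS q hq hqcd, ·⟩) (⟨_, hS p hp hpcd, ·⟩))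
  have hcm : LReachable R (moveCol R c m) :=
    ih _ (hlt _ hsepc) (fun r hr hrm ↦ hmR (Finset.mem_image.2 ⟨r, hr, hrm⟩))
      (fun e he ↦ hI e (hsub e (.inl he)).1)
      fun r hr hrm ↦ Finset.mem_filter.2 ⟨hS r hr (hsub _ (.inl hrm)).1, hrm⟩
  have hmd : LReachable (moveCol R c m) (moveCol (moveCol R c m) m d) := by
    refine ih _ (hlt _ hsepd) (fun r hr ↦ ?_) (fun e he ↦ ?_) (fun r hr hrm ↦ ?_)
    · exact (eq_or_mem_of_mem_moveCol hr).elim (by grind [uIoo]) (hd r)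
    · obtain ⟨hecd, hec, hem⟩ := hsub e (.inr he)
      exact not_interleave_moveCol hmR hec hem (hI e hecd)
    · obtain ⟨hrcd, -, hrm'⟩ := hsub _ (.inr hrm)
      exact Finset.mem_filter.2 ⟨hS r ((eq_or_mem_of_mem_moveCol hr).resolve_left hrm') hrcd, hrm⟩
  rw [moveCol_moveCol hmR] at hmd
  exact hcm.trans hmd

theorem lReachable_moveRow (hd : ∀ p ∈ R, p.2 ≠ d)
    (hI : ∀ e ∈ uIoo c d, ¬ Interleave (fun x ↦ (x, c) ∈ R) fun x ↦ (x, e) ∈ R) :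
    LReachable R (moveRow R c d) := by
  have h : LReachable (transpose R) (moveCol (transpose R) c d) :=
    lReachable_moveCol (fun ⟨_, _⟩ hp ↦ hd _ (mem_transpose.1 hp))
      (by simpa only [mem_transpose] using hI)
  simpa only [transpose_moveCol, transpose_transpose] using h.transpose

end Travel

section Sweep

/-- The part of a diagram consisting of the vertices on the line `x = a` at the heights in `Y`. -/
abbrev verticalEdge (a : ℝ) (Y : Finset ℝ) : GRD := {a} ×ˢ Y

/-- The part of a diagram consisting of the vertices on the line `y = b` at the abscissas in `X`. -/
abbrev horizontalEdge (X : Finset ℝ) (b : ℝ) : GRD := X ×ˢ {b}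

variable {H K : GRD} {X Y : Finset ℝ} {a b c d u v y : ℝ}

theorem mem_verticalEdge {p : ℝ × ℝ} : p ∈ verticalEdge a Y ↔ p.1 = a ∧ p.2 ∈ Y := by
  simp only [verticalEdge, Finset.mem_product, Finset.mem_singleton]

theorem mem_horizontalEdge {p : ℝ × ℝ} : p ∈ horizontalEdge X b ↔ p.1 ∈ X ∧ p.2 = b := by
  simp only [horizontalEdge, Finset.mem_product, Finset.mem_singleton]

theorem verticalEdge_empty : verticalEdge a ∅ = ∅ := Finset.product_empty _

theorem verticalEdge_insert : verticalEdge a (insert y Y) = insert (a, y) (verticalEdge a Y) := by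
  ext ⟨x, z⟩
  grind

theorem union_verticalEdge_pair :
    K ∪ verticalEdge a {u, v} = insert (a, u) (insert (a, v) K) := by
  ext ⟨x, y⟩
  grind

theorem union_horizontalEdge_pair :
    K ∪ horizontalEdge {a, b} v = insert (a, v) (insert (b, v) K) := by
  ext ⟨x, y⟩
  grind

theorem moveCol_union_verticalEdge (hH : ∀ p ∈ H, p.1 ≠ a) :
    moveCol (H ∪ verticalEdge a Y) a b = H ∪ verticalEdge b Y := by
  ext ⟨x, y⟩
  have := hH (x, y)
  have := hH (a, y)
  simp only [mem_moveCol, Finset.mem_union, mem_verticalEdge]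
  tauto

theorem moveRow_union_horizontalEdge (hH : ∀ p ∈ H, p.2 ≠ u) :
    moveRow (H ∪ horizontalEdge X u) u v = H ∪ horizontalEdge X v := by
  rw [moveRow, Finset.image_union]
  congr 1
  · exact (Finset.image_congr fun p hp ↦ if_neg (hH p hp)).trans Finset.image_id
  · ext ⟨x, y⟩
    simp only [Finset.mem_image, mem_horizontalEdge, Prod.exists]
    grind

theorem lReachable_verticalEdge_pair (hc : ∀ p ∈ H, p.1 ≠ c) (hd : ∀ p ∈ H, p.1 ≠ d)
    (hcd : c ≠ d) (huv : u ≤ v) (hrow : ∀ p ∈ H, p.2 ∉ Ioo u v) :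
    LReachable (H ∪ verticalEdge c {u, v}) (H ∪ verticalEdge d {u, v}) := by
  have h : LReachable (H ∪ verticalEdge c {u, v}) (moveCol (H ∪ verticalEdge c {u, v}) c d) := by
    refine lReachable_moveCol (by grind) fun e he ↦ ?_
    have hec : e ≠ c := by grind [uIoo]
    exact not_interleave_pair_of_notMem_Ioo (by grind) (by grind) huv
  rwa [moveCol_union_verticalEdge hc] at h

theorem lReachable_horizontalEdge_pair (hu : ∀ p ∈ H, p.2 ≠ u) (hv : ∀ p ∈ H, p.2 ≠ v)
    (huv : u ≠ v) (hcol : ∀ p ∈ H, p.1 ∈ Icc b a) :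
    LReachable (H ∪ horizontalEdge {b, a} u) (H ∪ horizontalEdge {b, a} v) := by
  have h : LReachable (H ∪ horizontalEdge {b, a} u)
      (moveRow (H ∪ horizontalEdge {b, a} u) u v) := by
    refine lReachable_moveRow (by grind) fun e he ↦ ?_
    have heu : e ≠ u := by grind [uIoo]
    exact not_interleave_pair_of_mem_Icc (u := b) (v := a) (by grind) (by grind)
  rwa [moveRow_union_horizontalEdge hu] at h

theorem lMove_endShift_left (hca : c < a) (huy : u < y) (hau : (a, u) ∈ K) (hay : (a, y) ∉ K)
    (hadj : ∀ t, (a, t) ∈ K → t ∉ Ioo u y) (hgap : ∀ p ∈ K, p.1 ∉ Ico c a) :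
    LMove (insert (a, y) K) (K ∪ verticalEdge c {u, y}) := by
  refine .endShift (.inl ⟨a, u, y, a - c, by grind, huy, by grind, by grind, by grind, .inr ?_⟩)
  rw [sub_sub_cancel, if_pos rfl, Finset.erase_insert hay]
  exact ⟨by grind, by grind⟩

theorem lMove_endShift_up (hdb : d < b) (huv : u < v) (hbu : (b, u) ∈ K) (hdu : (d, u) ∉ K)
    (hadj : ∀ t, (t, u) ∈ K → t ∉ Ioo d b) (hgap : ∀ p ∈ K, p.2 ∉ Ioc u v) :
    LMove (insert (d, u) K) (K ∪ horizontalEdge {d, b} v) := by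
  refine .endShift (.inr ⟨u, d, b, v - u, by grind, hdb, by grind, by grind, by grind, .inl ?_⟩)
  rw [add_sub_cancel, if_pos rfl, Finset.erase_insert hdu]
  exact ⟨by grind, by grind⟩

theorem lMove_destab (hdb : d < b) (hvy : v < y) (hby : (b, y) ∉ K)
    (hcol : ∀ p ∈ K, p.1 ∉ Ico d b) (hrow : ∀ p ∈ K, p.2 ∉ Ico v y) :
    LMove (insert (b, v) K ∪ verticalEdge d {v, y}) (insert (b, y) K) := by
  refine .destab ⟨b, y, d, v, Finset.mem_insert_self _ _, .inr ⟨hdb, hvy⟩, ?_⟩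
  rw [Finset.erase_insert hby]
  simp only [strictlyBetween, Finset.forall_mem_insert]
  refine ⟨by grind, by grind, by grind, by grind, by grind⟩

theorem lReachable_transfer (hba : b < a) (huy : u < y) (hau : (a, u) ∈ K) (hbu : (b, u) ∈ K)
    (hay : (a, y) ∉ K) (hby : (b, y) ∉ K) (hcol : ∀ p ∈ K, b ≤ p.1)
    (hrow : ∀ p ∈ K, p.2 ∉ Ioo u y) :
    LReachable (insert (a, y) K) (insert (b, y) K) := by
  obtain ⟨c, ⟨hbc, hca⟩, hc⟩ := exists_mem_Ioo_forall_lt (K.image Prod.fst) hba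
  obtain ⟨d, hdb⟩ := exists_lt b
  obtain ⟨v, huv, hvy⟩ := exists_between huy
  have hbreak : LMove (insert (a, y) K) (K ∪ verticalEdge c {u, y}) :=
    lMove_endShift_left hca huy hau hay (fun t ht ↦ hrow _ ht) (by grind)
  have htravel : LReachable (K ∪ verticalEdge c {u, y}) (K ∪ verticalEdge d {u, y}) :=
    lReachable_verticalEdge_pair (by grind) (by grind) (by grind) huy.le hrow
  have hlift : LMove (K ∪ verticalEdge d {u, y})
      (insert (d, y) K ∪ horizontalEdge {d, b} v) := by
    rw [union_verticalEdge_pair]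
    exact lMove_endShift_up hdb huv (by grind) (by grind) (by grind) (by grind)
  have habsorb : LMove (insert (d, y) K ∪ horizontalEdge {d, b} v) (insert (b, y) K) := by
    have hcorner : insert (d, y) K ∪ horizontalEdge {d, b} v =
        insert (b, v) K ∪ verticalEdge d {v, y} := by
      rw [union_horizontalEdge_pair, union_verticalEdge_pair]
      grind
    rw [hcorner]
    exact lMove_destab hdb hvy hby (by grind) (by grind)
  exact .head hbreak (htravel.trans (.head hlift (.single habsorb)))

theorem lReachable_absorb (hba : b < a) (hvy : v < y) (hH : ∀ p ∈ H, p.1 ∈ Ico b a)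
    (hby : (b, y) ∉ H) (hrow : ∀ p ∈ H, p.2 ∉ Ico v y) :
    LReachable (insert (b, v) H ∪ verticalEdge a {v, y}) (insert (b, y) H) := by
  obtain ⟨d, hdb⟩ := exists_lt b
  have htravel : LReachable (insert (b, v) H ∪ verticalEdge a {v, y})
      (insert (b, v) H ∪ verticalEdge d {v, y}) :=
    lReachable_verticalEdge_pair (by grind) (by grind) (by grind) hvy.le (by grind)
  exact htravel.tail (lMove_destab hdb hvy hby (by grind) hrow)

theorem lReachable_sweep (hba : b < a) (hY : Y.Nonempty) (hH : ∀ p ∈ H, p.1 ∈ Ico b a)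
    (hu : ∀ p ∈ H, p.2 ≠ u) (huY : u ∉ Y) (hbY : ∀ y ∈ Y, (b, y) ∉ H) :
    LReachable (H ∪ verticalEdge a Y ∪ horizontalEdge {b, a} u) (H ∪ verticalEdge b Y) := by
  induction Y using Finset.induction_on_min generalizing H u with
  | empty => simp only [Finset.not_nonempty_empty] at hY
  | insert y Y hyY ih =>
  obtain ⟨v, ⟨-, hvy⟩, hv⟩ :=
    exists_mem_Ioo_forall_lt (insert u (H.image Prod.snd)) (sub_one_lt y)
  refine (lReachable_horizontalEdge_pair (v := v) ?_ ?_ ?_ ?_).trans ?_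
  iterate 4 grind
  simp only [verticalEdge_insert, Finset.union_insert, Finset.insert_union]
  rcases Y.eq_empty_or_nonempty with rfl | hY'
  · have hcorner : insert (a, y) (H ∪ verticalEdge a ∅ ∪ horizontalEdge {b, a} v) =
        insert (b, v) H ∪ verticalEdge a {v, y} := by
      rw [union_horizontalEdge_pair, union_verticalEdge_pair, verticalEdge_empty]
      grind
    rw [hcorner, verticalEdge_empty, Finset.union_empty]
    exact lReachable_absorb hba hvy hH (by grind) (by grind)
  · have hcol : ∀ p ∈ H ∪ verticalEdge a Y ∪ horizontalEdge {b, a} v, b ≤ p.1 := by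
      simp only [Finset.forall_mem_union]
      exact ⟨⟨fun p hp ↦ (hH p hp).1, by grind⟩, by grind⟩
    have htransfer : LReachable (insert (a, y) (H ∪ verticalEdge a Y ∪ horizontalEdge {b, a} v))
        (insert (b, y) (H ∪ verticalEdge a Y ∪ horizontalEdge {b, a} v)) :=
      lReachable_transfer hba hvy (by grind) (by grind) (by grind) (by grind) hcol (by grind)
    have hrest : LReachable (insert (b, y) H ∪ verticalEdge a Y ∪ horizontalEdge {b, a} v)
        (insert (b, y) H ∪ verticalEdge b Y) :=
      ih hY' (by grind) (by grind) (by grind) (by grind)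
    simp only [Finset.insert_union] at hrest
    exact htransfer.trans hrest

end Sweep

section Column

variable {R R' : GRD} {a b u : ℝ}

/-- The heights of the vertices of a diagram on the line `x = a`. -/
noncomputable def column (R : GRD) (a : ℝ) : Finset ℝ := (R.filter (·.1 = a)).image Prod.snd

theorem mem_column {y : ℝ} : y ∈ column R a ↔ (a, y) ∈ R := by
  simp only [column, Finset.mem_image, Finset.mem_filter, Prod.exists]
  grind

theorem filter_union_verticalEdge_column :
    R.filter (·.1 ≠ a) ∪ verticalEdge a (column R a) = R := by
  ext ⟨x, y⟩
  simp only [Finset.mem_union, Finset.mem_filter, mem_verticalEdge, mem_column]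
  grind

theorem neg_moveCol : -moveCol R a b = moveCol (-R) (-a) (-b) := by
  ext ⟨x, y⟩
  simp only [Finset.mem_neg', Prod.neg_mk, mem_moveCol, neg_neg, neg_eq_iff_eq_neg, ne_eq]

theorem lReachable_union_horizontalEdge_pair (ha : ∃ p ∈ R, p.1 = a) (hb : ∀ p ∈ R, p.1 ≠ b)
    (hu : ∀ p ∈ R, p.2 ≠ u) (hab : a ≠ b) : LReachable R (R ∪ horizontalEdge {b, a} u) := by
  have hadd : VertexAddition R (insert (a, u) R) :=
    ⟨(a, u), fun h ↦ hu _ h rfl, rfl, .inl ⟨ha, hu⟩⟩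
  have hadd' : VertexAddition (insert (a, u) R) (insert (b, u) (insert (a, u) R)) :=
    ⟨(b, u), by grind, rfl, .inr ⟨⟨_, Finset.mem_insert_self _ _, rfl⟩, by grind⟩⟩
  rw [union_horizontalEdge_pair]
  exact .head (.vertexAddition hadd) (.single (.vertexAddition hadd'))

theorem lReachable_moveCol_rightmost (ha : ∃ p ∈ R, p.1 = a) (hRa : ∀ p ∈ R, p.1 ≤ a)
    (hbR : ∀ p ∈ R, b < p.1) : LReachable R (moveCol R a b) := by
  have hba : b < a := by grind
  obtain ⟨u, hu⟩ := Infinite.exists_notMem_finset (R.image Prod.snd)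
  have hrail : LReachable R (R ∪ horizontalEdge {b, a} u) :=
    lReachable_union_horizontalEdge_pair ha (by grind) (by grind) hba.ne'
  have hY : (column R a).Nonempty := by
    obtain ⟨⟨_, y⟩, hp, rfl⟩ := ha
    exact ⟨y, mem_column.2 hp⟩
  have hsweep : LReachable
      (R.filter (·.1 ≠ a) ∪ verticalEdge a (column R a) ∪ horizontalEdge {b, a} u)
      (R.filter (·.1 ≠ a) ∪ verticalEdge b (column R a)) :=
    lReachable_sweep hba hY (by grind) (by grind) (by grind [mem_column]) (by grind)
  rw [filter_union_verticalEdge_column,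
    ← moveCol_union_verticalEdge (a := a) fun p hp ↦ (Finset.mem_filter.1 hp).2,
    filter_union_verticalEdge_column] at hsweep
  exact hrail.trans hsweep

theorem lReachable_moveCol_leftmost (ha : ∃ p ∈ R, p.1 = a) (hRa : ∀ p ∈ R, a ≤ p.1)
    (hRb : ∀ p ∈ R, p.1 < b) : LReachable R (moveCol R a b) := by
  have h : LReachable (-R) (moveCol (-R) (-a) (-b)) := by
    obtain ⟨p, hp, rfl⟩ := ha
    refine lReachable_moveCol_rightmost ⟨-p, Finset.neg_mem_neg hp, rfl⟩ ?_ ?_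
    · exact fun q hq ↦ le_neg.1 (hRa (-q) (Finset.mem_neg'.1 hq))
    · exact fun q hq ↦ neg_lt.1 (hRb (-q) (Finset.mem_neg'.1 hq))
  simpa only [neg_moveCol, neg_neg] using h.neg

theorem lReachable_moveCol_extreme (ha : ∃ p ∈ R, p.1 = a)
    (h : (∀ p ∈ R, p.1 ≤ a) ∧ (∀ p ∈ R, b < p.1) ∨ (∀ p ∈ R, a ≤ p.1) ∧ ∀ p ∈ R, p.1 < b) :
    LReachable R (moveCol R a b) :=
  h.elim (fun h ↦ lReachable_moveCol_rightmost ha h.1 h.2)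
    fun h ↦ lReachable_moveCol_leftmost ha h.1 h.2

theorem lReachable_moveRow_extreme (ha : ∃ p ∈ R, p.2 = a)
    (h : (∀ p ∈ R, p.2 ≤ a) ∧ (∀ p ∈ R, b < p.2) ∨ (∀ p ∈ R, a ≤ p.2) ∧ ∀ p ∈ R, p.2 < b) :
    LReachable R (moveRow R a b) := by
  have htranspose : LReachable (transpose R) (moveCol (transpose R) a b) := by
    refine lReachable_moveCol_extreme ?_ ?_
    · simpa [transpose] using ha
    · simpa only [transpose, Finset.forall_mem_image, Prod.fst_swap] using h
  simpa only [transpose_moveCol, transpose_transpose] using htranspose.transpose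

theorem CyclicPermutation.lReachable (h : CyclicPermutation R R') : LReachable R R' := by
  rcases h with ⟨a, b, ha, hext, rfl⟩ | ⟨a, b, ha, hext, rfl⟩
  · exact lReachable_moveCol_extreme ha hext
  · exact lReachable_moveRow_extreme ha hext

end Column

/-- a cyclic permutation is a combination of finitely many commutations,
stabilizations of type L, destabilizations of type L, end shifts of type L and vertex
additions. -/
theorem statement5 (R R' : GRD) (h : CyclicPermutation R R') :
    Relation.ReflTransGen (fun A B : GRD =>
      Commutation A B ∨ Stab true A B ∨ Stab true B A ∨ EndShift true A B ∨
        VertexAddition A B ∨ CombEquiv A B) R R' := by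
  refine Relation.ReflTransGen.mono ?_ _ _ h.lReachable
  rintro A B (h | h | h | h | h | h) <;> simp only [h, true_or, or_true]

end RectDiag
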